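/- Let k be an algebraically closed field of characteristic 0 or p > 2, m a positive integer not divisible by the characteristic of k, and ζ ∈ k a primitive m-th root of unity. Let g ∈ GL(n,k) be such that the inner automorphism Int g of GL(n,k) has order exactly m, i.e. m is the least positive integer j such that g^j is a scalar matrix. Set 𝔤(1) = {x ∈ Mₙ(k) : g·x·g⁻¹ = ζ·x} and H = {h ∈ GL(n,k) : h·g = g·h}. Let c be a Cartan subspace of 𝔤(1) and r = dim c. Then there is a basis of c with respect to which the little Weyl group of c with respect to H is exactly the group G(m,1,r) of all monomial r×r matrices whose nonzero entries are m-th roots of unity; in particular this group has order m^r · r!. -/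

import Mathlib

open Matrix

/-- The group `G(m,q,r)` of `r×r` monomial matrices whose nonzero entries are
`m`-th roots of unity and the product of whose nonzero entries is an
`(m/q)`-th root of unity, as a set of matrices. -/
def GmqrSet (k : Type*) [Field k] (m q r : ℕ) : Set (Matrix (Fin r) (Fin r) k) :=
  {w | ∃ σ : Equiv.Perm (Fin r),
    (∀ i j, i ≠ σ j → w i j = 0) ∧
    (∀ j, w (σ j) j ^ m = 1) ∧
    (∏ j, w (σ j) j) ^ (m / q) = 1}

/-- A matrix is semisimple if it is diagonalizable. -/
def IsSemisimpleMat {k : Type*} [Field k] {N : Type*} [Fintype N] [DecidableEq N]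
    (x : Matrix N N k) : Prop :=
  ∃ P : Matrix N N k, IsUnit P.det ∧ (P * x * P⁻¹).IsDiag

/-- `c` is a Cartan subspace of `g1`: a subspace of `g1`, consisting of
pairwise commuting diagonalizable matrices, and maximal among such. -/
def IsCartanSubspace {k : Type*} [Field k] {N : Type*} [Fintype N] [DecidableEq N]
    (g1 : Set (Matrix N N k)) (c : Submodule k (Matrix N N k)) : Prop :=
  (c : Set (Matrix N N k)) ⊆ g1 ∧
  (∀ x ∈ c, ∀ y ∈ c, x * y = y * x) ∧
  (∀ x ∈ c, IsSemisimpleMat x) ∧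
  ∀ c' : Submodule k (Matrix N N k),
    ((c' : Set (Matrix N N k)) ⊆ g1 ∧ (∀ x ∈ c', ∀ y ∈ c', x * y = y * x) ∧
      (∀ x ∈ c', IsSemisimpleMat x)) → c ≤ c' → c' = c

/-- The little Weyl group of `c` with respect to `H`, written with respect to
the family `b` (a basis of `c`): the set of matrices of the transformations
`x ↦ h·x·h⁻¹` of `c`, for `h ∈ H` normalizing `c`. -/
def littleWeylSet {k : Type*} [Field k] {N : Type*} [Fintype N] [DecidableEq N] {r : ℕ}
    (H : Set (Matrix N N k)) (c : Submodule k (Matrix N N k))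
    (b : Fin r → Matrix N N k) : Set (Matrix (Fin r) (Fin r) k) :=
  {w | ∃ h ∈ H, (∀ x ∈ c, h * x * h⁻¹ ∈ c) ∧ (∀ x ∈ c, h⁻¹ * x * h ∈ c) ∧
    ∀ j, h * b j * h⁻¹ = ∑ i, w i j • b i}

/-!
The commuting diagonalizable elements of `c` decompose `kⁿ` into weight spaces. If `v` has weight
`μ ≠ 0`, then `v, g v, …, g ^ (m - 1) v` have the distinct weights `μ, ζ⁻¹ μ, …, ζ ^ (1 - m) μ`,
and `g ^ m` is a scalar; so `kⁿ` is a sum of cyclic blocks of length `m` and of the zero weight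
space. By maximality `c` contains, hence is spanned by, the clock matrices
`diag (1, ζ⁻¹, …, ζ ^ (1 - m))` of the blocks. These are orthogonal and satisfy `b ^ (m + 1) = b`;
conjugation keeps both properties, so on this basis its matrix is monomial with `m`-th roots of
unity as entries. Conversely, permuting the blocks and composing with powers of `g` on them
commutes with `g` and yields all such matrices.
-/

section MonomialMatrices

variable {ι R k : Type*} [DecidableEq ι]

/-- The monomial matrix whose `j`-th column has the single entry `d j`, in row `σ j`. -/
def monomialMatrix [Zero R] (σ : Equiv.Perm ι) (d : ι → R) : Matrix ι ι R :=
  of fun i j => if i = σ j then d j else 0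

theorem monomialMatrix_apply [Zero R] (σ : Equiv.Perm ι) (d : ι → R) (i j : ι) :
    monomialMatrix σ d i j = if i = σ j then d j else 0 :=
  rfl

theorem monomialMatrix_inj [Zero R] {σ τ : Equiv.Perm ι} {d e : ι → R} (hd : ∀ j, d j ≠ 0) :
    monomialMatrix σ d = monomialMatrix τ e ↔ σ = τ ∧ d = e := by
  refine ⟨fun h => ?_, by rintro ⟨rfl, rfl⟩; rfl⟩
  have entry (j : ι) : d j = if σ j = τ j then e j else 0 := by
    simpa [monomialMatrix_apply] using congrFun (congrFun h (σ j)) j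
  have hστ (j : ι) : σ j = τ j := by
    by_contra hne
    exact hd j (by simpa [hne] using entry j)
  exact ⟨Equiv.ext hστ, funext fun j => by simpa [hστ j] using entry j⟩

theorem sum_monomialMatrix_smul {A : Type*} [Fintype ι] [Semiring R] [AddCommMonoid A] [Module R A]
    (σ : Equiv.Perm ι) (d : ι → R) (b : ι → A) (j : ι) :
    ∑ i, monomialMatrix σ d i j • b i = d j • b (σ j) := by
  simp [monomialMatrix_apply, ite_smul]

variable [Field k] {m r : ℕ}

theorem mem_GmqrSet_one_iff {w : Matrix (Fin r) (Fin r) k} :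
    w ∈ GmqrSet k m 1 r ↔ ∃ σ d, (∀ j, d j ^ m = 1) ∧ monomialMatrix σ d = w := by
  constructor
  · rintro ⟨σ, hzero, hroot, -⟩
    refine ⟨σ, fun j => w (σ j) j, hroot, ?_⟩
    ext i j
    rw [monomialMatrix_apply]
    split_ifs with hij
    · rw [hij]
    · exact (hzero i j hij).symm
  · rintro ⟨σ, d, hd, rfl⟩
    refine ⟨σ, fun i j hij => if_neg hij, fun j => ?_, ?_⟩
    · simp [monomialMatrix_apply, hd]
    · simp [monomialMatrix_apply, ← Finset.prod_pow, hd]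

theorem GmqrSet_one_eq_range [NeZero m] : GmqrSet k m 1 r =
    Set.range fun p : Equiv.Perm (Fin r) × (Fin r → rootsOfUnity m k) =>
      monomialMatrix p.1 fun j => ((p.2 j : kˣ) : k) := by
  ext w
  rw [mem_GmqrSet_one_iff]
  constructor
  · rintro ⟨σ, d, hd, rfl⟩
    exact ⟨(σ, fun j => rootsOfUnity.mkOfPowEq (d j) (hd j)), by simp⟩
  · rintro ⟨⟨σ, d⟩, rfl⟩
    exact ⟨σ, _, fun j => (mem_rootsOfUnity' m _).1 (d j).2, rfl⟩

theorem card_GmqrSet_one {ζ : k} [NeZero m] (hζ : IsPrimitiveRoot ζ m) :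
    Nat.card (GmqrSet k m 1 r) = m ^ r * r.factorial := by
  rw [GmqrSet_one_eq_range, Nat.card_range_of_injective]
  · rw [Nat.card_prod, Nat.card_fun, Nat.card_perm, Nat.card_fin, hζ.card_rootsOfUnity, mul_comm]
  · rintro ⟨σ, d⟩ ⟨τ, e⟩ h
    obtain ⟨rfl, hde⟩ := (monomialMatrix_inj fun j => (d j : kˣ).ne_zero).1 h
    congr
    funext j
    exact Subtype.ext (Units.ext (congrFun hde j))

theorem exists_monomialMatrix_pow_of_mem_GmqrSet_one {ζ : k} [NeZero m] (hζ : IsPrimitiveRoot ζ m)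
    {w : Matrix (Fin r) (Fin r) k} (hw : w ∈ GmqrSet k m 1 r) :
    ∃ (σ : Equiv.Perm (Fin r)) (s : Fin r → Fin m),
      monomialMatrix σ (fun j => ζ ^ (s j : ℕ)) = w := by
  obtain ⟨σ, d, hd, rfl⟩ := mem_GmqrSet_one_iff.1 hw
  choose s hsm hs using fun j => hζ.eq_pow_of_pow_eq_one (hd j)
  exact ⟨σ, fun j => ⟨s j, hsm j⟩, by simp only [hs]⟩

theorem mem_GmqrSet_one_of_col_row {w : Matrix (Fin r) (Fin r) k}
    (hcol : ∀ j, ∃ i, w i j ≠ 0) (hrow : ∀ i j j', j ≠ j' → w i j * w i j' = 0)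
    (hpow : ∀ i j, w i j ^ (m + 1) = w i j) : w ∈ GmqrSet k m 1 r := by
  choose σ hσ using hcol
  have eq_of_ne_zero {i j j'} (hj : w i j ≠ 0) (hj' : w i j' ≠ 0) : j = j' := by
    by_contra hne
    exact mul_ne_zero hj hj' (hrow i j j' hne)
  have σ_inj : Function.Injective σ := fun j j' h => eq_of_ne_zero (hσ j) (h ▸ hσ j')
  have σ_bij : Function.Bijective σ := Finite.injective_iff_bijective.1 σ_inj
  refine mem_GmqrSet_one_iff.2 ⟨.ofBijective σ σ_bij, fun j => w (σ j) j, fun j => ?_, ?_⟩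
  · exact mul_right_cancel₀ (hσ j) (by rw [← pow_succ, hpow, one_mul])
  · ext i j
    rw [monomialMatrix_apply, Equiv.ofBijective_apply]
    split_ifs with hij
    · rw [hij]
    · obtain ⟨j', rfl⟩ := σ_bij.surjective i
      by_contra hne
      exact hij (congrArg σ (eq_of_ne_zero (hσ j') (Ne.symm hne)))

end MonomialMatrices

section OrthogonalPotents

variable {k A ι : Type*} [Field k] [Ring A] [Algebra k A] {m : ℕ} {b : ι → A}

/-- Nonzero, pairwise orthogonal elements `b i` with `b i ^ (m + 1) = b i`: for `m = 1`, orthogonal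
idempotents. The matrices of the transformations between two such families with the same span
are monomial, with entries `m`-th roots of unity. -/
structure IsOrthogonalPotent (m : ℕ) (b : ι → A) : Prop where
  ne_zero : ∀ i, b i ≠ 0
  mul_eq_zero : ∀ i j, i ≠ j → b i * b j = 0
  pow_succ_eq : ∀ i, b i ^ (m + 1) = b i

namespace IsOrthogonalPotent

theorem conj_units (hb : IsOrthogonalPotent m b) (u : Aˣ) :
    IsOrthogonalPotent m fun i => (u : A) * b i * (↑u⁻¹ : A) := by
  change IsOrthogonalPotent m fun i => ConjAct.toConjAct u • b i
  constructor
  · simpa [smul_eq_zero_iff_eq] using hb.ne_zero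
  · intro i j hij
    rw [← smul_mul', hb.mul_eq_zero i j hij, smul_zero]
  · intro i
    rw [← smul_pow', hb.pow_succ_eq]

theorem map {A' F : Type*} [Ring A'] [FunLike F A A'] [RingHomClass F A A']
    (hb : IsOrthogonalPotent m b) (f : F) (hf : Function.Injective f) :
    IsOrthogonalPotent m fun i => f (b i) := by
  constructor
  · exact fun i => (map_ne_zero_iff f hf).2 (hb.ne_zero i)
  · intro i j hij
    rw [← map_mul, hb.mul_eq_zero i j hij, map_zero]
  · intro i
    rw [← map_pow, hb.pow_succ_eq]

theorem pow_ne_zero [NeZero m] (hb : IsOrthogonalPotent m b) (i : ι) (N : ℕ) : b i ^ N ≠ 0 := by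
  intro h
  have iterate (q : ℕ) : b i ^ (m * q + 1) = b i := by
    induction q with
    | zero => simp
    | succ q ih => rw [mul_add, mul_one, add_right_comm, pow_add, ih, ← pow_succ', hb.pow_succ_eq]
  refine hb.ne_zero i ?_
  rw [← iterate N]
  exact pow_eq_zero_of_le (by nlinarith [NeZero.one_le (n := m)]) h

theorem sum_smul_mul [Fintype ι] (hb : IsOrthogonalPotent m b) (t : ι → k) (j : ι) :
    (∑ i, t i • b i) * b j = t j • b j ^ 2 := by
  rw [Finset.sum_mul, Finset.sum_eq_single j]
  · rw [smul_mul_assoc, sq]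
  · intro i _ hij
    rw [smul_mul_assoc, hb.mul_eq_zero i j hij, smul_zero]
  · simp

theorem sum_smul_pow_mul [Fintype ι] (hb : IsOrthogonalPotent m b) (t : ι → k) (j : ι) (N : ℕ) :
    (∑ i, t i • b i) ^ N * b j = t j ^ N • b j ^ (N + 1) := by
  induction N with
  | zero => simp
  | succ N ih =>
    rw [pow_succ', mul_assoc, ih, mul_smul_comm, pow_succ' (b j), ← mul_assoc, hb.sum_smul_mul,
      smul_mul_assoc, smul_smul, ← pow_add, pow_succ, add_comm 2 N]

theorem linearIndependent [Finite ι] [NeZero m] (hb : IsOrthogonalPotent m b) :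
    LinearIndependent k b := by
  cases nonempty_fintype ι
  refine Fintype.linearIndependent_iff.2 fun t ht j => ?_
  have h := hb.sum_smul_mul t j
  rw [ht, zero_mul] at h
  exact (smul_eq_zero.1 h.symm).resolve_right (hb.pow_ne_zero j 2)

theorem matrix_mem_GmqrSet {r : ℕ} [NeZero m] {b : Fin r → A} (hb : IsOrthogonalPotent m b)
    {w : Matrix (Fin r) (Fin r) k} (hw : IsOrthogonalPotent m fun j => ∑ i, w i j • b i) :
    w ∈ GmqrSet k m 1 r := by
  have pow_smul_inj {i : Fin r} {N : ℕ} {s t : k} (h : s • b i ^ N = t • b i ^ N) : s = t :=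
    smul_left_injective k (hb.pow_ne_zero i N) h
  refine mem_GmqrSet_one_of_col_row (fun j => ?_) (fun i j j' hj => ?_) fun i j => ?_
  · by_contra! h
    exact hw.ne_zero j (by simp [h])
  · apply pow_smul_inj (i := i) (N := 3)
    calc (w i j * w i j') • b i ^ 3
        = (∑ l, w l j • b l) * ((∑ l, w l j' • b l) * b i) := by
          rw [hb.sum_smul_mul, mul_smul_comm, sq, ← mul_assoc, hb.sum_smul_mul, smul_mul_assoc,
            ← pow_succ, smul_smul, mul_comm]
      _ = (0 : k) • b i ^ 3 := by
          rw [← mul_assoc, hw.mul_eq_zero j j' hj, zero_mul, zero_smul]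
  · apply pow_smul_inj (i := i) (N := 2)
    calc w i j ^ (m + 1) • b i ^ 2
        = (∑ l, w l j • b l) ^ (m + 1) * b i := by
          rw [hb.sum_smul_pow_mul, pow_succ (b i) (m + 1), hb.pow_succ_eq, sq]
      _ = w i j • b i ^ 2 := by rw [hw.pow_succ_eq, hb.sum_smul_mul]

end IsOrthogonalPotent

end OrthogonalPotents

section SkewCentralizer

variable {k A : Type*} [CommSemiring k] [Semiring A] [Algebra k A] {ξ η : k} {g x y : A}

/-- The elements `x` with `x * g = ξ • (g * x)`. For `g` invertible and `ξ = ζ⁻¹` this is the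
`ζ`-eigenspace of conjugation by `g`, the piece `𝔤(1)` of the grading. -/
def skewCentralizer (ξ : k) (g : A) : Submodule k A where
  carrier := {x | x * g = ξ • (g * x)}
  zero_mem' := by simp
  add_mem' {x y} hx hy := by
    rw [Set.mem_ofPred_eq] at *
    rw [add_mul, hx, hy, mul_add, smul_add]
  smul_mem' t x hx := by
    rw [Set.mem_ofPred_eq] at *
    rw [smul_mul_assoc, hx, mul_smul_comm, smul_comm]

theorem mem_skewCentralizer_iff : x ∈ skewCentralizer ξ g ↔ x * g = ξ • (g * x) :=
  Iff.rfl

theorem mem_skewCentralizer_one_iff : x ∈ skewCentralizer (1 : k) g ↔ Commute x g := by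
  rw [mem_skewCentralizer_iff, one_smul, commute_iff_eq]

theorem mul_mem_skewCentralizer (hx : x ∈ skewCentralizer ξ g) (hy : y ∈ skewCentralizer η g) :
    x * y ∈ skewCentralizer (ξ * η) g := by
  rw [mem_skewCentralizer_iff] at *
  rw [mul_assoc, hy, mul_smul_comm, ← mul_assoc, hx, smul_mul_assoc, smul_smul, mul_assoc,
    mul_comm η]

theorem pow_mem_skewCentralizer (hx : x ∈ skewCentralizer ξ g) (N : ℕ) :
    x ^ N ∈ skewCentralizer (ξ ^ N) g := by
  induction N with
  | zero => simp [mem_skewCentralizer_iff]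
  | succ N ih => simpa only [pow_succ] using mul_mem_skewCentralizer ih hx

theorem mul_pow_of_mem_skewCentralizer (hx : x ∈ skewCentralizer ξ g) (i : ℕ) :
    x * g ^ i = ξ ^ i • (g ^ i * x) := by
  induction i with
  | zero => simp
  | succ i ih =>
    rw [pow_succ, ← mul_assoc, ih, smul_mul_assoc, mul_assoc, mem_skewCentralizer_iff.1 hx,
      mul_smul_comm, smul_smul, mul_assoc, pow_succ]

theorem map_mem_skewCentralizer_iff {A' : Type*} [Semiring A'] [Algebra k A'] (φ : A ≃ₐ[k] A') :
    φ x ∈ skewCentralizer ξ (φ g) ↔ x ∈ skewCentralizer ξ g := by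
  rw [mem_skewCentralizer_iff, mem_skewCentralizer_iff, ← map_mul, ← map_mul, ← map_smul,
    φ.injective.eq_iff]

theorem map_pow_eq_smul_one {A' F : Type*} [Semiring A'] [Algebra k A'] [FunLike F A A']
    [AlgHomClass F k A A'] (φ : F) {m : ℕ} {a : kˣ} (hg : g ^ m = a • 1) : φ g ^ m = a • 1 := by
  rw [← map_pow, hg, Units.smul_def, map_smul, map_one, Units.smul_def]

end SkewCentralizer

section CyclicOrbits

open Module Module.End Submodule

variable {k V : Type*} [Field k] [AddCommGroup V] [Module k V]
  {ξ : k} {m : ℕ} {a : kˣ} {g x : End k V} {C : Set (End k V)} {U : Submodule k V} {v : V}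

/-- The weight vectors of `C`: the common eigenvectors of its elements, and zero. -/
def commonEigenvectors (C : Set (End k V)) : Set V :=
  {v | ∀ x ∈ C, x v ∈ span k {v}}

/-- The common kernel of the elements of `C`: the zero weight space. -/
def commonKernel (C : Set (End k V)) : Submodule k V :=
  ⨅ x ∈ C, LinearMap.ker x

theorem mem_commonKernel_iff : v ∈ commonKernel C ↔ ∀ x ∈ C, x v = 0 := by
  simp [commonKernel]

theorem span_commonEigenvectors_eq_top [FiniteDimensional k V]
    (hcomm : ∀ x ∈ C, ∀ y ∈ C, Commute x y) (hdiag : ∀ x ∈ C, ⨆ μ, eigenspace x μ = ⊤)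
    (hgen : ∀ x ∈ C, ∀ μ, maxGenEigenspace x μ = eigenspace x μ) :
    span k (commonEigenvectors C) = ⊤ := by
  have htop := iSup_iInf_maxGenEigenspace_eq_top_of_iSup_maxGenEigenspace_eq_top_of_commute
    (fun x : C => (x : End k V)) (fun x y _ => hcomm x x.2 y y.2)
    (fun x => by simpa only [hgen x x.2] using hdiag x x.2)
  rw [eq_top_iff, ← htop, iSup_le_iff]
  intro χ v hv
  refine subset_span fun x hx => mem_span_singleton.2 ⟨χ ⟨x, hx⟩, ?_⟩
  have hxv := (mem_iInf _).1 hv ⟨x, hx⟩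
  rw [hgen x hx, mem_eigenspace_iff] at hxv
  exact hxv.symm

theorem apply_pow_apply_of_mem_skewCentralizer (hx : x ∈ skewCentralizer ξ g) (i : ℕ) (v : V) :
    x ((g ^ i) v) = ξ ^ i • (g ^ i) (x v) :=
  LinearMap.congr_fun (mul_pow_of_mem_skewCentralizer hx i) v

theorem pow_apply_of_pow_eq_smul_one (hg : g ^ m = a • 1) (v : V) : (g ^ m) v = a • v := by
  rw [hg, LinearMap.smul_apply, Module.End.one_apply]

theorem pow_apply_mem_of_mem_invtSubmodule (hgU : U ∈ g.invtSubmodule) (i : ℕ) (hv : v ∈ U) :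
    (g ^ i) v ∈ U := by
  induction i with
  | zero => exact hv
  | succ i ih => exact pow_succ' g i ▸ hgU ih

theorem mem_of_pow_apply_mem (hg : g ^ m = a • 1) (hgU : U ∈ g.invtSubmodule) {i : ℕ} (hi : i ≤ m)
    (hv : (g ^ i) v ∈ U) : v ∈ U := by
  have h : (g ^ (m - i)) ((g ^ i) v) ∈ U := pow_apply_mem_of_mem_invtSubmodule hgU (m - i) hv
  rwa [← Module.End.mul_apply, ← pow_add, Nat.sub_add_cancel hi, pow_apply_of_pow_eq_smul_one hg,
    Units.smul_def, U.smul_mem_iff a.ne_zero] at h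

/-- The vectors `v, g v, …, g ^ (m - 1) v`: the orbit of `v` up to scalars when `g ^ m` is a
scalar. -/
def orbit (m : ℕ) (g : End k V) (v : V) (i : Fin m) : V :=
  (g ^ (i : ℕ)) v

theorem span_orbit_mem_invtSubmodule (hg : g ^ m = a • 1) (v : V) :
    span k (Set.range (orbit m g v)) ∈ g.invtSubmodule := by
  rw [mem_invtSubmodule, span_le]
  rintro _ ⟨i, rfl⟩
  change g ((g ^ (i : ℕ)) v) ∈ span k (Set.range (orbit m g v))
  rw [← Module.End.mul_apply, ← pow_succ']
  rcases (Nat.succ_le_of_lt i.2).lt_or_eq with hi | hi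
  · exact subset_span ⟨⟨i + 1, hi⟩, rfl⟩
  · rw [← Nat.succ_eq_add_one, hi, pow_apply_of_pow_eq_smul_one hg]
    exact smul_mem _ _ (subset_span ⟨⟨0, i.pos⟩, by simp [orbit]⟩)

theorem span_orbit_mem_invtSubmodule_of_mem_skewCentralizer (hx : x ∈ skewCentralizer ξ g)
    (hxv : x v ∈ span k {v}) : span k (Set.range (orbit m g v)) ∈ x.invtSubmodule := by
  obtain ⟨μ, hμ⟩ := mem_span_singleton.1 hxv
  rw [mem_invtSubmodule, span_le]
  rintro _ ⟨i, rfl⟩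
  change x ((g ^ (i : ℕ)) v) ∈ span k (Set.range (orbit m g v))
  rw [apply_pow_apply_of_mem_skewCentralizer hx, ← hμ, map_smul]
  exact smul_mem _ _ (smul_mem _ _ (subset_span ⟨i, rfl⟩))

theorem linearIndependent_mkQ_orbit (hξ : IsPrimitiveRoot ξ m) (hg : g ^ m = a • 1)
    (hx : x ∈ skewCentralizer ξ g) (hgU : U ∈ g.invtSubmodule) (hxU : U ∈ x.invtSubmodule)
    (hxv : x v ∈ span k {v}) (hxv0 : x v ≠ 0) (hvU : v ∉ U) :
    LinearIndependent k (U.mkQ ∘ orbit m g v) := by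
  -- Modulo `U`, the vectors `g ^ i v` are eigenvectors of `x` for distinct eigenvalues `ξ ^ i * μ`.
  obtain ⟨μ, hμ⟩ := mem_span_singleton.1 hxv
  have hμ0 : μ ≠ 0 := by
    rintro rfl
    exact hxv0 (by rw [← hμ, zero_smul])
  refine eigenvectors_linearIndependent' (U.mapQ U x (x.mem_invtSubmodule.1 hxU))
    (fun i : Fin m => ξ ^ (i : ℕ) * μ) ?_ (U.mkQ ∘ orbit m g v) ?_
  · intro i j hij
    exact Fin.ext (hξ.pow_inj i.2 j.2 (mul_right_cancel₀ hμ0 hij))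
  · refine fun i => ⟨?_, fun h => hvU ?_⟩
    · rw [mem_eigenspace_iff, Function.comp_apply, mkQ_apply, mapQ_apply, orbit,
        apply_pow_apply_of_mem_skewCentralizer hx, ← hμ, map_smul, smul_smul, Quotient.mk_smul]
    · exact mem_of_pow_apply_mem hg hgU i.2.le ((Quotient.mk_eq_zero U).1 h)

/-- The orbits of the vectors `u j`, put together into one family, a candidate for a basis. -/
def orbits {ι : Type*} (m : ℕ) (g : End k V) (u : ι → V) (p : ι × Fin m) : V :=
  orbit m g (u p.1) p.2

theorem orbits_cons {r : ℕ} (g : End k V) (v : V) (u : Fin r → V) :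
    orbits m g (Fin.cons v u : Fin (r + 1) → V) = Sum.elim (orbit m g v) (orbits m g u) ∘
      ((finSuccEquiv r).prodCongr (.refl (Fin m))).trans optionProdEquiv := by
  funext ⟨j, i⟩
  cases j using Fin.cases <;> simp [orbits]

theorem exists_orbits_isCompl [FiniteDimensional k V] [NeZero m] (hξ : IsPrimitiveRoot ξ m)
    (hg : g ^ m = a • 1) (hC : ∀ x ∈ C, x ∈ skewCentralizer ξ g)
    (hspan : span k (commonEigenvectors C) = ⊤) (U : Submodule k V) :
    U ∈ g.invtSubmodule → (∀ x ∈ C, U ∈ x.invtSubmodule) → commonKernel C ≤ U →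
      ∃ (r : ℕ) (u : Fin r → V), (∀ j, u j ∈ commonEigenvectors C) ∧
        LinearIndependent k (orbits m g u) ∧ IsCompl U (span k (Set.range (orbits m g u))) := by
  induction U using WellFoundedGT.induction with
  | _ U ih =>
  intro hgU hCU hKU
  by_cases htop : U = ⊤
  · exact ⟨0, Fin.elim0, fun j => j.elim0, linearIndependent_empty_type,
      by simpa [Set.range_eq_empty] using htop ▸ isCompl_top_bot⟩
  obtain ⟨v, hv, hvU⟩ : ∃ v ∈ commonEigenvectors C, v ∉ U := by
    by_contra! h
    exact htop (eq_top_iff.2 (hspan ▸ span_le.2 h))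
  obtain ⟨x, hx, hxv⟩ : ∃ x ∈ C, x v ≠ 0 := by
    by_contra! h
    exact hvU (hKU (mem_commonKernel_iff.2 h))
  set S := span k (Set.range (orbit m g v))
  have hli := linearIndependent_mkQ_orbit hξ hg (hC x hx) hgU (hCU x hx) (hv x hx) hxv hvU
  have hUS : Disjoint U S := by
    simpa only [ker_mkQ] using (Submodule.range_ker_disjoint hli).symm
  have hvS : v ∈ S := subset_span ⟨⟨0, NeZero.pos m⟩, by simp [orbit]⟩
  obtain ⟨r, u, hu, hlu, hcompl⟩ := ih (U ⊔ S)
    (left_lt_sup.2 fun h => hvU (h hvS))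
    (g.invtSubmodule.sup_mem hgU (span_orbit_mem_invtSubmodule hg v))
    (fun y hy => y.invtSubmodule.sup_mem (hCU y hy)
      (span_orbit_mem_invtSubmodule_of_mem_skewCentralizer (hC y hy) (hv y hy)))
    (hKU.trans le_sup_left)
  refine ⟨r + 1, Fin.cons v u, Fin.cases hv hu, ?_, ?_⟩
  · rw [orbits_cons, linearIndependent_equiv]
    exact (LinearIndependent.of_comp _ hli).sum_type hlu (hcompl.disjoint.mono_left le_sup_right)
  · rw [orbits_cons, EquivLike.range_comp, Set.Sum.elim_range, span_union]
    exact ⟨hUS.disjoint_sup_right_of_disjoint_sup_left hcompl.disjoint,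
      by rw [codisjoint_iff, ← sup_assoc, hcompl.sup_eq_top]⟩

end CyclicOrbits

section CyclicBases

open Module Module.End Submodule

variable {k V : Type*} [Field k] [AddCommGroup V] [Module k V]
  {ξ : k} {m : ℕ} {a : kˣ} {g x y : End k V} {C : Set (End k V)}

/-- A basis adapted to `g`, when `g ^ m` is a nonzero scalar: cyclic blocks
`gen j, g (gen j), …, g ^ (m - 1) (gen j)` for `j : ι`, and a basis, indexed by `Z`, of a
`g`-invariant complement of their span. -/
structure CyclicBasis (g : End k V) (m : ℕ) (ι Z : Type*) where
  basis : Basis ((ι × Fin m) ⊕ Z) k V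
  gen : ι → V
  basis_inl : ∀ p, basis (.inl p) = orbits m g gen p
  apply_basis_inr_mem : ∀ z, g (basis (.inr z)) ∈ span k (Set.range fun z => basis (.inr z))

theorem commonKernel_mem_invtSubmodule_of_mem (hx : x ∈ C) :
    commonKernel C ∈ x.invtSubmodule := by
  intro v hv
  rw [mem_comap, mem_commonKernel_iff.1 hv x hx]
  exact zero_mem _

theorem commonKernel_mem_invtSubmodule_of_skewCentralizer (hC : ∀ x ∈ C, x ∈ skewCentralizer ξ g) :
    commonKernel C ∈ g.invtSubmodule := by
  refine fun v hv => mem_comap.2 (mem_commonKernel_iff.2 fun x hx => ?_)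
  have h := apply_pow_apply_of_mem_skewCentralizer (hC x hx) 1 v
  rwa [pow_one, mem_commonKernel_iff.1 hv x hx, map_zero, smul_zero] at h

theorem exists_cyclicBasis [FiniteDimensional k V] [NeZero m] (hξ : IsPrimitiveRoot ξ m)
    (hg : g ^ m = a • 1) (hC : ∀ x ∈ C, x ∈ skewCentralizer ξ g)
    (hspan : span k (commonEigenvectors C) = ⊤) :
    ∃ (r : ℕ) (T : CyclicBasis g m (Fin r) (Fin (finrank k (commonKernel C)))),
      (∀ j, T.gen j ∈ commonEigenvectors C) ∧ ∀ z, T.basis (.inr z) ∈ commonKernel C := by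
  set K := commonKernel C
  have hgK : K ∈ g.invtSubmodule := commonKernel_mem_invtSubmodule_of_skewCentralizer hC
  obtain ⟨r, u, hu, hli, hcompl⟩ := exists_orbits_isCompl hξ hg hC hspan K hgK
    (fun x hx => commonKernel_mem_invtSubmodule_of_mem hx) le_rfl
  let f : Fin (finrank k K) → V := fun z => finBasis k K z
  have hf : LinearIndependent k f := (finBasis k K).linearIndependent.map' K.subtype K.ker_subtype
  have hfK : span k (Set.range f) = K := by
    change span k (Set.range (K.subtype ∘ finBasis k K)) = K
    rw [Set.range_comp, span_image, (finBasis k K).span_eq, map_subtype_top]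
  let B := Basis.mk (hli.sum_type hf (hfK.symm ▸ hcompl.disjoint.symm))
    (by rw [Set.Sum.elim_range, span_union, hfK, hcompl.symm.sup_eq_top])
  have hB (z) : B (.inr z) = f z := by simp [B]
  refine ⟨r, ⟨B, u, fun p => by simp [B], fun z => ?_⟩, hu, fun z => ?_⟩
  · simp only [hB]
    exact hfK.symm ▸ hgK (finBasis k K z).2
  · exact hB z ▸ (finBasis k K z).2

namespace CyclicBasis

variable {ι Z : Type*} (T : CyclicBasis g m ι Z)

theorem gen_ne_zero [NeZero m] (j : ι) : T.gen j ≠ 0 := by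
  simpa [T.basis_inl, orbits, orbit] using T.basis.ne_zero (.inl (j, 0))

theorem ext_of_mem_skewCentralizer (hx : x ∈ skewCentralizer ξ g) (hy : y ∈ skewCentralizer ξ g)
    (hgen : ∀ j, x (T.gen j) = y (T.gen j))
    (hinr : ∀ z, x (T.basis (.inr z)) = y (T.basis (.inr z))) : x = y := by
  refine T.basis.ext ?_
  rintro (⟨j, i⟩ | z)
  · rw [T.basis_inl, orbits, orbit, apply_pow_apply_of_mem_skewCentralizer hx,
      apply_pow_apply_of_mem_skewCentralizer hy, hgen]
  · exact hinr z

theorem apply_basis_mem_span_singleton (hx : x ∈ skewCentralizer ξ g)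
    (hgen : ∀ j, x (T.gen j) ∈ span k {T.gen j}) (hinr : ∀ z, x (T.basis (.inr z)) = 0) (p) :
    x (T.basis p) ∈ span k {T.basis p} := by
  rcases p with ⟨j, i⟩ | z
  · obtain ⟨t, ht⟩ := mem_span_singleton.1 (hgen j)
    rw [T.basis_inl, orbits, orbit, apply_pow_apply_of_mem_skewCentralizer hx, ← ht, map_smul]
    exact smul_mem _ _ (smul_mem _ _ (mem_span_singleton_self _))
  · rw [hinr]
    exact zero_mem _

/-- The element of `skewCentralizer ξ g` with prescribed values `t j` on the generators `gen j`,
acting on the complement of the cyclic blocks as the scalar `e`. -/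
noncomputable def twist (ξ : k) (t : ι → V) (e : k) : End k V :=
  T.basis.constr k <|
    Sum.elim (fun p => ξ ^ (p.2 : ℕ) • orbits m g t p) fun z => e • T.basis (.inr z)

variable {t : ι → V} {e : k}

theorem twist_inr (z : Z) : T.twist ξ t e (T.basis (.inr z)) = e • T.basis (.inr z) := by
  rw [twist, Basis.constr_basis, Sum.elim_inr]

theorem twist_inl (p : ι × Fin m) :
    T.twist ξ t e (T.basis (.inl p)) = ξ ^ (p.2 : ℕ) • orbits m g t p := by
  rw [twist, Basis.constr_basis, Sum.elim_inl]

theorem twist_gen [NeZero m] (j : ι) : T.twist ξ t e (T.gen j) = t j := by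
  simpa [T.basis_inl, orbits, orbit] using T.twist_inl (ξ := ξ) (t := t) (e := e) (j, 0)

theorem twist_pow_gen [NeZero m] (hξ : ξ ^ m = 1) (hg : g ^ m = a • 1) (j : ι) {i : ℕ}
    (hi : i ≤ m) : T.twist ξ t e ((g ^ i) (T.gen j)) = ξ ^ i • (g ^ i) (t j) := by
  rcases hi.lt_or_eq with hi | rfl
  · simpa only [T.basis_inl, orbits, orbit] using
      T.twist_inl (ξ := ξ) (t := t) (e := e) (j, ⟨i, hi⟩)
  · rw [pow_apply_of_pow_eq_smul_one hg, pow_apply_of_pow_eq_smul_one hg, hξ, one_smul,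
      Units.smul_def, map_smul, twist_gen, Units.smul_def]

theorem twist_mem_skewCentralizer [NeZero m] (hξ : ξ ^ m = 1) (hg : g ^ m = a • 1)
    (he : ξ * e = e) : T.twist ξ t e ∈ skewCentralizer ξ g := by
  refine T.basis.ext ?_
  rintro (⟨j, i⟩ | z)
  · have shift (v : V) : g ((g ^ (i : ℕ)) v) = (g ^ (i + 1 : ℕ)) v := by
      rw [pow_succ', Module.End.mul_apply]
    change T.twist ξ t e (g (T.basis (.inl (j, i)))) = ξ • g (T.twist ξ t e (T.basis (.inl (j, i))))
    rw [T.twist_inl, T.basis_inl, orbits, orbits, orbit, orbit, shift,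
      T.twist_pow_gen hξ hg j i.2, map_smul, shift, smul_smul, ← pow_succ']
  · have scalar : span k (Set.range fun z => T.basis (.inr z)) ≤ eigenspace (T.twist ξ t e) e :=
      span_le.2 (Set.forall_mem_range.2 fun z => mem_eigenspace_iff.2 (T.twist_inr z))
    change T.twist ξ t e (g (T.basis (.inr z))) = ξ • g (T.twist ξ t e (T.basis (.inr z)))
    rw [T.twist_inr, mem_eigenspace_iff.1 (scalar (T.apply_basis_inr_mem z)), map_smul, smul_smul,
      he]

section Clock

variable [DecidableEq ι]

/-- The clock matrix `diag (1, ξ, …, ξ ^ (m - 1))` in the `j`-th block, zero elsewhere; on that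
block `g` acts as a shift matrix, up to a scalar in one entry. -/
noncomputable def clock (ξ : k) (j : ι) : End k V :=
  T.twist ξ (Pi.single j (T.gen j)) 0

theorem clock_mem_skewCentralizer [NeZero m] (hξ : ξ ^ m = 1) (hg : g ^ m = a • 1) (j : ι) :
    T.clock ξ j ∈ skewCentralizer ξ g :=
  T.twist_mem_skewCentralizer hξ hg (mul_zero ξ)

theorem clock_inr (j : ι) (z : Z) : T.clock ξ j (T.basis (.inr z)) = 0 := by
  rw [clock, twist_inr, zero_smul]

theorem clock_gen [NeZero m] (j i : ι) :
    T.clock ξ j (T.gen i) = if i = j then T.gen i else 0 := by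
  rw [clock, twist_gen, Pi.single_apply]
  split_ifs with h
  · rw [h]
  · rfl

theorem isOrthogonalPotent_clock [NeZero m] (hξ : ξ ^ m = 1) (hg : g ^ m = a • 1) :
    IsOrthogonalPotent m (T.clock ξ) where
  ne_zero j h := T.gen_ne_zero j (by simpa [h] using (T.clock_gen (ξ := ξ) j j).symm)
  mul_eq_zero i j hij := by
    refine T.ext_of_mem_skewCentralizer (mul_mem_skewCentralizer
      (T.clock_mem_skewCentralizer hξ hg i) (T.clock_mem_skewCentralizer hξ hg j))
      (zero_mem _) (fun l => ?_) fun z => ?_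
    · rw [Module.End.mul_apply, clock_gen]
      split_ifs with hl
      · simp [clock_gen, hl, hij.symm]
      · simp
    · simp [clock_inr]
  pow_succ_eq j := by
    have hpow := pow_mem_skewCentralizer (T.clock_mem_skewCentralizer hξ hg j) (m + 1)
    rw [pow_succ, hξ, one_mul] at hpow
    refine T.ext_of_mem_skewCentralizer hpow (T.clock_mem_skewCentralizer hξ hg j)
      (fun l => ?_) fun z => ?_
    · by_cases hl : l = j
      · rw [Module.End.pow_apply, Function.iterate_fixed (by rw [clock_gen, if_pos hl]), clock_gen,
          if_pos hl]
      · rw [pow_succ, Module.End.mul_apply, clock_gen, if_neg hl, map_zero]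
    · rw [pow_succ, Module.End.mul_apply, clock_inr, map_zero]

theorem clock_apply_basis_mem_span_singleton [NeZero m] (hξ : ξ ^ m = 1) (hg : g ^ m = a • 1)
    (j : ι) (p) : T.clock ξ j (T.basis p) ∈ span k {T.basis p} := by
  refine T.apply_basis_mem_span_singleton (T.clock_mem_skewCentralizer hξ hg j) (fun i => ?_)
    (T.clock_inr j) p
  rw [clock_gen]
  split_ifs
  exacts [mem_span_singleton_self _, zero_mem _]

theorem mem_span_clock [Finite ι] [NeZero m] (hξ : ξ ^ m = 1) (hg : g ^ m = a • 1)
    (hx : x ∈ skewCentralizer ξ g) (hgen : ∀ j, x (T.gen j) ∈ span k {T.gen j})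
    (hinr : ∀ z, x (T.basis (.inr z)) = 0) : x ∈ span k (Set.range (T.clock ξ)) := by
  cases nonempty_fintype ι
  choose t ht using fun j => mem_span_singleton.1 (hgen j)
  refine (mem_span_range_iff_exists_fun k).2 ⟨t, ?_⟩
  refine T.ext_of_mem_skewCentralizer
    (sum_mem fun j _ => smul_mem _ _ (T.clock_mem_skewCentralizer hξ hg j)) hx (fun j => ?_)
    fun z => ?_
  · simp [LinearMap.sum_apply, clock_gen, ht]
  · simp [LinearMap.sum_apply, clock_inr, hinr]

end Clock

section BlockPerm

variable {σ : Equiv.Perm ι} {s : ι → Fin m}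

/-- The element of the centralizer of `g` taking the `j`-th block to the `σ j`-th one, composed
with the power `g ^ s j`, and fixing the complement of the blocks. -/
noncomputable def blockPerm (σ : Equiv.Perm ι) (s : ι → Fin m) : End k V :=
  T.twist 1 (fun j => orbit m g (T.gen (σ j)) (s j)) 1

theorem blockPerm_mem_skewCentralizer [NeZero m] (hg : g ^ m = a • 1) :
    T.blockPerm σ s ∈ skewCentralizer (1 : k) g :=
  T.twist_mem_skewCentralizer (one_pow m) hg (one_mul 1)

theorem isUnit_blockPerm [FiniteDimensional k V] [NeZero m] (hg : g ^ m = a • 1) :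
    IsUnit (T.blockPerm σ s) := by
  rw [LinearMap.isUnit_iff_range_eq_top, eq_top_iff, ← T.basis.span_eq, span_le]
  have hcomm := mem_skewCentralizer_one_iff.1 (T.blockPerm_mem_skewCentralizer hg (σ := σ) (s := s))
  have invt : LinearMap.range (T.blockPerm σ s) ∈ g.invtSubmodule := by
    rintro _ ⟨v, rfl⟩
    exact ⟨g v, LinearMap.congr_fun hcomm v⟩
  rintro _ ⟨⟨j, i⟩ | z, rfl⟩
  · rw [T.basis_inl]
    refine pow_apply_mem_of_mem_invtSubmodule invt i
      (mem_of_pow_apply_mem hg invt (s (σ.symm j)).2.le ?_)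
    exact ⟨T.gen (σ.symm j), by rw [blockPerm, twist_gen, σ.apply_symm_apply, orbit]⟩
  · exact ⟨T.basis (.inr z), by rw [blockPerm, twist_inr, one_smul]⟩

theorem smul_blockPerm_mul_clock [DecidableEq ι] [NeZero m] (hξ : ξ ^ m = 1) (hg : g ^ m = a • 1)
    (j : ι) : ξ ^ (s j : ℕ) • (T.blockPerm σ s * T.clock ξ j) =
      T.clock ξ (σ j) * T.blockPerm σ s := by
  have clock_mem := T.clock_mem_skewCentralizer hξ hg
  have perm_mem := T.blockPerm_mem_skewCentralizer hg (σ := σ) (s := s)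
  refine T.ext_of_mem_skewCentralizer (ξ := ξ)
    (smul_mem _ _ (by simpa using mul_mem_skewCentralizer perm_mem (clock_mem j)))
    (by simpa using mul_mem_skewCentralizer (clock_mem (σ j)) perm_mem) (fun i => ?_) fun z => ?_
  · rw [LinearMap.smul_apply, Module.End.mul_apply, Module.End.mul_apply, clock_gen, blockPerm,
      twist_gen, orbit, apply_pow_apply_of_mem_skewCentralizer (clock_mem _), clock_gen]
    rcases eq_or_ne i j with rfl | hij
    · simp [twist_gen, orbit]
    · simp [hij]
  · simp [blockPerm, twist_inr, clock_inr]

end BlockPerm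

end CyclicBasis

end CyclicBases

section Diagonal

open Module Module.End Submodule

variable {k V κ : Type*} [Field k] [AddCommGroup V] [Module k V] {B : Basis κ k V} {x y : End k V}

/-- The endomorphisms of which every vector of the basis `B` is an eigenvector. -/
noncomputable def diagonalIn (B : Basis κ k V) : Submodule k (End k V) :=
  ⨅ p, (span k {B p}).comap (LinearMap.applyₗ (B p))

theorem mem_diagonalIn_iff : x ∈ diagonalIn B ↔ ∀ p, x (B p) ∈ span k {B p} := by
  simp [diagonalIn]

theorem mem_diagonalIn_iff_exists_diagonal [Fintype κ] [DecidableEq κ] :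
    x ∈ diagonalIn B ↔ ∃ d, toLin B B (diagonal d) = x := by
  have apply_basis (d : κ → k) (p : κ) : toLin B B (diagonal d) (B p) = d p • B p :=
    (hasEigenvector_toLin_diagonal d p B).apply_eq_smul
  rw [mem_diagonalIn_iff]
  constructor
  · intro h
    choose d hd using fun p => mem_span_singleton.1 (h p)
    exact ⟨d, B.ext fun p => by rw [apply_basis, hd]⟩
  · rintro ⟨d, rfl⟩ p
    rw [apply_basis]
    exact smul_mem _ _ (mem_span_singleton_self _)

theorem mem_diagonalIn_iff_isDiag_toMatrix [Fintype κ] [DecidableEq κ] :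
    x ∈ diagonalIn B ↔ (LinearMap.toMatrix B B x).IsDiag := by
  rw [mem_diagonalIn_iff_exists_diagonal]
  constructor
  · rintro ⟨d, rfl⟩
    rw [LinearMap.toMatrix_toLin]
    exact isDiag_diagonal d
  · intro h
    exact ⟨_, by rw [h.diagonal_diag, toLin_toMatrix]⟩

theorem mem_diagonalIn_reindex {κ' : Type*} (e : κ ≃ κ') :
    x ∈ diagonalIn (B.reindex e) ↔ x ∈ diagonalIn B := by
  simp only [mem_diagonalIn_iff, Basis.reindex_apply]
  exact e.symm.forall_congr_right (q := fun p => x (B p) ∈ span k {B p})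

theorem commute_of_mem_diagonalIn [Finite κ] (hx : x ∈ diagonalIn B) (hy : y ∈ diagonalIn B) :
    Commute x y := by
  classical
  cases nonempty_fintype κ
  obtain ⟨d, rfl⟩ := mem_diagonalIn_iff_exists_diagonal.1 hx
  obtain ⟨e, rfl⟩ := mem_diagonalIn_iff_exists_diagonal.1 hy
  rw [commute_iff_eq, Module.End.mul_eq_comp, Module.End.mul_eq_comp, ← toLin_mul, ← toLin_mul,
    diagonal_mul_diagonal, diagonal_mul_diagonal]
  simp only [mul_comm]

theorem iSup_eigenspace_eq_top_of_mem_diagonalIn [Finite κ] (hx : x ∈ diagonalIn B) :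
    ⨆ μ, eigenspace x μ = ⊤ := by
  classical
  cases nonempty_fintype κ
  obtain ⟨d, rfl⟩ := mem_diagonalIn_iff_exists_diagonal.1 hx
  exact iSup_eigenspace_toLin_diagonal_eq_top d B

theorem maxGenEigenspace_eq_eigenspace_of_mem_diagonalIn [Finite κ] (hx : x ∈ diagonalIn B)
    (μ : k) : maxGenEigenspace x μ = eigenspace x μ := by
  classical
  cases nonempty_fintype κ
  obtain ⟨d, rfl⟩ := mem_diagonalIn_iff_exists_diagonal.1 hx
  exact maxGenEigenspace_toLin_diagonal_eq_eigenspace d B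

end Diagonal

section CartanSubspaces

open Module Submodule

variable {k N κ : Type*} [Field k] [Fintype N] [DecidableEq N]
  {x : Matrix N N k} {c g1 : Submodule k (Matrix N N k)}

theorem exists_basis_toMatrix_basisFun_eq {P : Matrix N N k} (hP : IsUnit P.det) :
    ∃ B : Basis N k (N → k), B.toMatrix (Pi.basisFun k N) = P := by
  refine ⟨(Pi.basisFun k N).map
    (toLin'OfInv (mul_nonsing_inv P hP) (nonsing_inv_mul P hP)), ?_⟩
  rw [Basis.toMatrix_map]
  ext i j
  simp [Basis.toMatrix_apply, toLin'OfInv]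

theorem toMatrix_basisFun_mul_mul_inv (B : Basis N k (N → k)) (x : Matrix N N k) :
    B.toMatrix (Pi.basisFun k N) * x * (B.toMatrix (Pi.basisFun k N))⁻¹ =
      LinearMap.toMatrix B B (toLin' x) := by
  rw [inv_eq_right_inv (B.toMatrix_mul_toMatrix_flip (Pi.basisFun k N)),
    ← basis_toMatrix_mul_linearMap_toMatrix_mul_basis_toMatrix B (Pi.basisFun k N) B
      (Pi.basisFun k N), ← toLin_eq_toLin', LinearMap.toMatrix_toLin]

theorem isSemisimpleMat_iff_exists_mem_diagonalIn :
    IsSemisimpleMat x ↔ ∃ B : Basis N k (N → k), toLin' x ∈ diagonalIn B := by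
  have conj_isDiag (B : Basis N k (N → k)) : toLin' x ∈ diagonalIn B ↔
      (B.toMatrix (Pi.basisFun k N) * x * (B.toMatrix (Pi.basisFun k N))⁻¹).IsDiag := by
    rw [toMatrix_basisFun_mul_mul_inv, mem_diagonalIn_iff_isDiag_toMatrix]
  constructor
  · rintro ⟨P, hP, hdiag⟩
    obtain ⟨B, rfl⟩ := exists_basis_toMatrix_basisFun_eq hP
    exact ⟨B, (conj_isDiag B).2 hdiag⟩
  · rintro ⟨B, hB⟩
    exact ⟨_, isUnit_det_of_right_inverse (B.toMatrix_mul_toMatrix_flip _), (conj_isDiag B).1 hB⟩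

theorem isSemisimpleMat_of_mem_diagonalIn (B : Basis κ k (N → k)) (hx : toLin' x ∈ diagonalIn B) :
    IsSemisimpleMat x :=
  isSemisimpleMat_iff_exists_mem_diagonalIn.2
    ⟨B.reindex (B.indexEquiv (Pi.basisFun k N)), (mem_diagonalIn_reindex _).2 hx⟩

namespace IsCartanSubspace

theorem span_commonEigenvectors_eq_top (hc : IsCartanSubspace g1 c) :
    span k (commonEigenvectors (toLinAlgEquiv' '' (c : Set (Matrix N N k)))) = ⊤ := by
  have diagonalizable (x) (hx : x ∈ c) :=
    isSemisimpleMat_iff_exists_mem_diagonalIn.1 (hc.2.2.1 x hx)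
  refine _root_.span_commonEigenvectors_eq_top ?_ ?_ ?_
  · rintro _ ⟨x, hx, rfl⟩ _ ⟨y, hy, rfl⟩
    exact Commute.map (hc.2.1 x hx y hy) toLinAlgEquiv'
  · rintro _ ⟨x, hx, rfl⟩
    exact (diagonalizable x hx).elim fun B hB => iSup_eigenspace_eq_top_of_mem_diagonalIn hB
  · rintro _ ⟨x, hx, rfl⟩
    exact (diagonalizable x hx).elim fun B hB => maxGenEigenspace_eq_eigenspace_of_mem_diagonalIn hB

theorem mem_of_mem_diagonalIn (hc : IsCartanSubspace g1 c) (B : Basis κ k (N → k))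
    (hB : ∀ x ∈ c, toLin' x ∈ diagonalIn B) (hx : x ∈ g1) (hxB : toLin' x ∈ diagonalIn B) :
    x ∈ c := by
  have : Finite κ := Module.Finite.finite_basis B
  let c' := g1 ⊓ (diagonalIn B).comap (toLinAlgEquiv' (R := k) (n := N)).toLinearMap
  have hc' : c' = c := by
    refine hc.2.2.2 c' ⟨inf_le_left, fun x hx y hy => ?_, fun x hx => ?_⟩
      (le_inf hc.1 hB)
    · exact toLinAlgEquiv'.injective (by simpa using (commute_of_mem_diagonalIn hx.2 hy.2).eq)
    · exact isSemisimpleMat_of_mem_diagonalIn B hx.2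
  exact hc' ▸ ⟨hx, hxB⟩

theorem exists_cyclicBasis {ξ : k} {m : ℕ} [NeZero m] (hξ : IsPrimitiveRoot ξ m) {a : kˣ}
    {g : Matrix N N k} (hg : g ^ m = a • 1) (hc : IsCartanSubspace (skewCentralizer ξ g) c) :
    ∃ (r d : ℕ) (T : CyclicBasis (toLinAlgEquiv' g) m (Fin r) (Fin d)),
      span k (Set.range fun j => toLinAlgEquiv'.symm (T.clock ξ j)) = c := by
  let ψ : Matrix N N k ≃ₐ[k] End k (N → k) := toLinAlgEquiv'
  have mem_iff {x} : ψ x ∈ skewCentralizer ξ (ψ g) ↔ x ∈ skewCentralizer ξ g :=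
    map_mem_skewCentralizer_iff ψ
  have hψg : ψ g ^ m = a • 1 := map_pow_eq_smul_one ψ hg
  obtain ⟨r, T, hgen, hinr⟩ := _root_.exists_cyclicBasis (C := ψ '' c) hξ hψg
    (by rintro _ ⟨x, hx, rfl⟩; exact mem_iff.2 (hc.1 hx)) hc.span_commonEigenvectors_eq_top
  have gen_mem {x} (hx : x ∈ c) (j) : ψ x (T.gen j) ∈ span k {T.gen j} := hgen j _ ⟨x, hx, rfl⟩
  have inr_eq {x} (hx : x ∈ c) (z) : ψ x (T.basis (.inr z)) = 0 :=
    mem_commonKernel_iff.1 (hinr z) _ ⟨x, hx, rfl⟩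
  refine ⟨r, _, T, le_antisymm (span_le.2 ?_) fun x hx => ?_⟩
  · rintro _ ⟨j, rfl⟩
    refine hc.mem_of_mem_diagonalIn T.basis (fun x hx => mem_diagonalIn_iff.2 ?_)
      (mem_iff.1 ?_) (mem_diagonalIn_iff.2 ?_)
    · exact T.apply_basis_mem_span_singleton (mem_iff.2 (hc.1 hx)) (gen_mem hx) (inr_eq hx)
    · rw [ψ.apply_symm_apply]
      exact T.clock_mem_skewCentralizer hξ.pow_eq_one hψg j
    · change ∀ p, ψ (ψ.symm (T.clock ξ j)) (T.basis p) ∈ span k {T.basis p}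
      rw [ψ.apply_symm_apply]
      exact T.clock_apply_basis_mem_span_singleton hξ.pow_eq_one hψg j
  · have h := T.mem_span_clock hξ.pow_eq_one hψg (mem_iff.2 (hc.1 hx)) (gen_mem hx) (inr_eq hx)
    change x ∈ span k (Set.range fun j => ψ.symm (T.clock ξ j))
    simpa only [map_span, ← Set.range_comp, Function.comp_def, AlgEquiv.toLinearMap_apply,
      ψ.symm_apply_apply] using mem_map_of_mem (f := ψ.symm.toLinearMap) h

end IsCartanSubspace

end CartanSubspaces

theorem mul_mul_mem_of_mem_span {k A ι : Type*} [CommSemiring k] [Semiring A] [Algebra k A]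
    {b : ι → A} {S : Submodule k A} {x y z : A} (hb : ∀ j, x * b j * y ∈ S)
    (hz : z ∈ Submodule.span k (Set.range b)) : x * z * y ∈ S :=
  (Submodule.span_le (p := S.comap (LinearMap.mulLeftRight k (x, y)))).2
    (Set.forall_mem_range.2 hb) hz

theorem exists_units_smul_one_eq {k A : Type*} [Field k] [Ring A] [Algebra k A] {t : k}
    (ht : IsUnit (t • (1 : A))) : ∃ a : kˣ, t • (1 : A) = a • 1 := by
  rcases eq_or_ne t 0 with rfl | h
  · rw [zero_smul, isUnit_zero_iff] at ht
    exact ⟨1, by rw [zero_smul, one_smul, ht]⟩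
  · exact ⟨Units.mk0 t h, rfl⟩

section LittleWeylGroups

open Module Submodule

variable {k N : Type*} [Field k] [Fintype N] [DecidableEq N] {m r : ℕ} {ζ : k}

theorem littleWeylSet_eq_GmqrSet_one [NeZero m] (hζ : IsPrimitiveRoot ζ m)
    {b : Fin r → Matrix N N k} (hb : IsOrthogonalPotent m b) {H : Set (Matrix N N k)}
    (hH : ∀ h ∈ H, IsUnit h)
    (hperm : ∀ (σ : Equiv.Perm (Fin r)) (s : Fin r → Fin m), ∃ h ∈ H,
      ∀ j, h * b j = ζ ^ (s j : ℕ) • (b (σ j) * h)) :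
    littleWeylSet H (span k (Set.range b)) b = GmqrSet k m 1 r := by
  ext w
  constructor
  · rintro ⟨h, hh, -, -, hw⟩
    obtain ⟨u, rfl⟩ := hH h hh
    refine hb.matrix_mem_GmqrSet ?_
    simpa only [← hw, ← coe_units_inv] using hb.conj_units u
  · intro hw
    obtain ⟨σ, s, rfl⟩ := exists_monomialMatrix_pow_of_mem_GmqrSet_one hζ hw
    obtain ⟨h, hh, hmul⟩ := hperm σ s
    obtain ⟨u, rfl⟩ := hH h hh
    have hconj (j) : u * b j * (↑u⁻¹ : Matrix N N k) = ζ ^ (s j : ℕ) • b (σ j) := by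
      rw [hmul, smul_mul_assoc, Units.mul_inv_cancel_right]
    have conj_inv (j) : (↑u⁻¹ : Matrix N N k) * b (σ j) * u = (ζ ^ (s j : ℕ))⁻¹ • b j := by
      rw [eq_inv_smul_iff₀ (pow_ne_zero _ (hζ.ne_zero (NeZero.ne m))), mul_assoc, ← mul_smul_comm,
        ← hmul, Units.inv_mul_cancel_left]
    have mem_span (j) : b j ∈ span k (Set.range b) := subset_span ⟨j, rfl⟩
    refine ⟨u, hh, fun x => mul_mul_mem_of_mem_span fun j => ?_,
      fun x => mul_mul_mem_of_mem_span (σ.surjective.forall.2 fun j => ?_), fun j => ?_⟩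
    · exact coe_units_inv u ▸ hconj j ▸ smul_mem _ _ (mem_span (σ j))
    · exact coe_units_inv u ▸ conj_inv j ▸ smul_mem _ _ (mem_span j)
    · rw [← coe_units_inv, hconj, sum_monomialMatrix_smul]

theorem IsCartanSubspace.exists_isOrthogonalPotent [NeZero m] (hζ : IsPrimitiveRoot ζ m)
    {a : kˣ} {g : Matrix N N k} (hg : g ^ m = a • 1) {c : Submodule k (Matrix N N k)}
    (hc : IsCartanSubspace (skewCentralizer ζ⁻¹ g) c) :
    ∃ (r : ℕ) (b : Fin r → Matrix N N k), IsOrthogonalPotent m b ∧ span k (Set.range b) = c ∧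
      ∀ (σ : Equiv.Perm (Fin r)) (s : Fin r → Fin m), ∃ h : Matrix N N k, IsUnit h ∧ h * g = g * h ∧
        ∀ j, h * b j = ζ ^ (s j : ℕ) • (b (σ j) * h) := by
  have hpow : ζ⁻¹ ^ m = 1 := hζ.inv.pow_eq_one
  obtain ⟨r, d, T, hT⟩ := hc.exists_cyclicBasis hζ.inv hg
  let ψ : Matrix N N k ≃ₐ[k] End k (N → k) := toLinAlgEquiv'
  have hψg : ψ g ^ m = a • 1 := map_pow_eq_smul_one ψ hg
  refine ⟨r, fun j => ψ.symm (T.clock ζ⁻¹ j),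
    (T.isOrthogonalPotent_clock hpow hψg).map ψ.symm ψ.symm.injective, hT, fun σ s => ?_⟩
  refine ⟨ψ.symm (T.blockPerm σ s), (T.isUnit_blockPerm hψg).map ψ.symm, ?_, fun j => ?_⟩
  · refine (mem_skewCentralizer_one_iff.1 ((map_mem_skewCentralizer_iff ψ).1 ?_)).eq
    rw [ψ.apply_symm_apply]
    exact T.blockPerm_mem_skewCentralizer hψg
  · have h := congrArg ψ.symm (T.smul_blockPerm_mul_clock (σ := σ) (s := s) hpow hψg j)
    rwa [map_smul, map_mul, map_mul, inv_pow,
      inv_smul_eq_iff₀ (pow_ne_zero _ (hζ.ne_zero (NeZero.ne m)))] at h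

theorem setOf_conj_eq_smul_eq_skewCentralizer {g : Matrix N N k} (hg : IsUnit g.det) (hζ : ζ ≠ 0) :
    {x | g * x * g⁻¹ = ζ • x} = (skewCentralizer ζ⁻¹ g : Set (Matrix N N k)) := by
  ext x
  obtain ⟨u, rfl⟩ := (isUnit_iff_isUnit_det g).2 hg
  rw [Set.mem_ofPred_eq, SetLike.mem_coe, mem_skewCentralizer_iff, ← coe_units_inv,
    Units.mul_inv_eq_iff_eq_mul, smul_mul_assoc, eq_inv_smul_iff₀ hζ, eq_comm]

end LittleWeylGroups

theorem stmt10_general {k N : Type*} [Field k] [Fintype N] [DecidableEq N] {m r : ℕ} (hm : 0 < m)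
    {ζ : k} (hζ : IsPrimitiveRoot ζ m) {g : Matrix N N k} (hg : IsUnit g.det)
    (hgm : ∃ a : k, g ^ m = a • (1 : Matrix N N k)) {c : Submodule k (Matrix N N k)}
    (hc : IsCartanSubspace {x | g * x * g⁻¹ = ζ • x} c) (hr : Module.finrank k c = r) :
    (∃ b : Fin r → Matrix N N k,
      LinearIndependent k b ∧ Submodule.span k (Set.range b) = c ∧
      littleWeylSet {h | IsUnit h.det ∧ h * g = g * h} c b = GmqrSet k m 1 r) ∧
    Nat.card (GmqrSet k m 1 r) = m ^ r * r.factorial := by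
  have : NeZero m := ⟨hm.ne'⟩
  obtain ⟨t, ht⟩ := hgm
  obtain ⟨a, ha⟩ := exists_units_smul_one_eq (ht ▸ ((isUnit_iff_isUnit_det g).2 hg).pow m)
  rw [setOf_conj_eq_smul_eq_skewCentralizer hg (hζ.ne_zero hm.ne')] at hc
  obtain ⟨r', b, hb, rfl, hperm⟩ := hc.exists_isOrthogonalPotent hζ (ht.trans ha)
  obtain rfl : r' = r := by
    rw [← hr, finrank_span_eq_card hb.linearIndependent, Fintype.card_fin]
  refine ⟨⟨b, hb.linearIndependent, rfl, littleWeylSet_eq_GmqrSet_one hζ hb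
    (fun h hh => (isUnit_iff_isUnit_det h).2 hh.1) fun σ s => ?_⟩, card_GmqrSet_one hζ⟩
  obtain ⟨h, hu, hcomm, hmul⟩ := hperm σ s
  exact ⟨h, ⟨(isUnit_iff_isUnit_det h).1 hu, hcomm⟩, hmul⟩

/-- little Weyl group of an inner automorphism of `GL(n,k)` (or
`SL(n,k)` with `p ∤ n`) of order exactly `m`: with respect to a suitable basis
of a Cartan subspace `c` (of dimension `r`) it equals `G(m,1,r)`; in
particular it has order `m^r · r!`. -/
theorem stmt10 {k : Type*} [Field k] [IsAlgClosed k]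
    (hchar : ringChar k = 0 ∨ 2 < ringChar k)
    (m : ℕ) (hm : 0 < m) (hmchar : ¬ (ringChar k ∣ m))
    (ζ : k) (hζ : IsPrimitiveRoot ζ m)
    (n : ℕ) (g : Matrix (Fin n) (Fin n) k) (hg : IsUnit g.det)
    (hordm : ∃ a : k, g ^ m = a • (1 : Matrix (Fin n) (Fin n) k))
    (hordleast : ∀ j : ℕ, 0 < j → j < m →
      ∀ a : k, g ^ j ≠ a • (1 : Matrix (Fin n) (Fin n) k))
    (c : Submodule k (Matrix (Fin n) (Fin n) k))
    (hc : IsCartanSubspace {x | g * x * g⁻¹ = ζ • x} c)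
    (r : ℕ) (hr : Module.finrank k c = r) :
    (∃ b : Fin r → Matrix (Fin n) (Fin n) k,
      LinearIndependent k b ∧ Submodule.span k (Set.range b) = c ∧
      littleWeylSet {h | IsUnit h.det ∧ h * g = g * h} c b = GmqrSet k m 1 r) ∧
    Nat.card (GmqrSet k m 1 r) = m ^ r * Nat.factorial r :=
  stmt10_general hm hζ hg hordm hc hr
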